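/- Let (M,𝒳) be a small n-exact category and let X : X⁰ → X¹ → ⋯ → Xⁿ → X^{n+1} and Y : X⁰ → Y¹ → ⋯ → Yⁿ → X^{n+1} be two 𝒳-admissible n-exact sequences with the same end terms. Suppose the complexes 0 → H_{X⁰} → H_{X¹} → ⋯ → H_{X^{n+1}} → 0 and 0 → H_{X⁰} → H_{Y¹} → ⋯ → H_{X^{n+1}} → 0 in Mod(M) are Yoneda equivalent in the localization of Mod(M) at the weakly effaceable functors, i.e., they are connected by a finite zigzag of complexes 0 → H_{X⁰} → F¹ → ⋯ → Fⁿ → H_{X^{n+1}} → 0 with Eff-closed middle terms and all homology weakly effaceable, via morphisms of complexes restricting to the identity on H_{X⁰} and on H_{X^{n+1}}. Then X and Y are homotopy equivalent n-exact sequences in M: there is a morphism of complexes X → Y which is the identity on X⁰ and X^{n+1} and is a homotopy equivalence. -/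

import Mathlib

open CategoryTheory CategoryTheory.Limits Opposite

attribute [local instance] CategoryTheory.Limits.hasBinaryBiproducts_of_finite_biproducts

universe u

namespace NExactCat

variable {M : Type u} [SmallCategory M] [Preadditive M] [HasFiniteBiproducts M]

/-- A sequence (`ℕ`-indexed, only the indices `0, …, n+1` of the objects and `0, …, n` of the
maps being relevant) of composable morphisms in an additive category. -/
structure NSeq (M : Type u) [SmallCategory M] where
  X : ℕ → M
  d : ∀ i, X i ⟶ X (i + 1)

/-- `S` is a complex (in degrees `0, …, n+1`). -/
def NSeq.IsComplex (n : ℕ) (S : NSeq M) : Prop :=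
  ∀ i, i + 1 ≤ n → S.d i ≫ S.d (i + 1) = 0

/-- `(d¹,…,dⁿ)` is an `n`-cokernel of `d⁰`: for every `W` the sequence
`0 → Hom(X^{n+1},W) → Hom(Xⁿ,W) → ⋯ → Hom(X⁰,W)` of abelian groups is exact. -/
def RightNExact (n : ℕ) (S : NSeq M) : Prop :=
  (∀ W : M, Function.Injective fun g : S.X (n + 1) ⟶ W => S.d n ≫ g) ∧
  (∀ W : M, ∀ i, i < n → Function.Exact
      (fun g : S.X (i + 2) ⟶ W => S.d (i + 1) ≫ g)
      (fun g : S.X (i + 1) ⟶ W => S.d i ≫ g))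

/-- `(d⁰,…,d^{n-1})` is an `n`-kernel of `dⁿ`: for every `W` the sequence
`0 → Hom(W,X⁰) → Hom(W,X¹) → ⋯ → Hom(W,X^{n+1})` of abelian groups is exact. -/
def LeftNExact (n : ℕ) (S : NSeq M) : Prop :=
  (∀ W : M, Function.Injective fun g : W ⟶ S.X 0 => g ≫ S.d 0) ∧
  (∀ W : M, ∀ i, i < n → Function.Exact
      (fun g : W ⟶ S.X i => g ≫ S.d i)
      (fun g : W ⟶ S.X (i + 1) => g ≫ S.d (i + 1)))

/-- An `n`-exact sequence: a complex which is both a left and a right `n`-exact sequence. -/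
def IsNExactSeq (n : ℕ) (S : NSeq M) : Prop :=
  S.IsComplex n ∧ LeftNExact n S ∧ RightNExact n S

/-- `f` is a morphism of complexes `S ⟶ T` (in degrees `0, …, n+1`). -/
def IsNSeqHom (n : ℕ) (S T : NSeq M) (f : ∀ i, S.X i ⟶ T.X i) : Prop :=
  ∀ i, i ≤ n → S.d i ≫ f (i + 1) = f i ≫ T.d i

/-- There is a weak isomorphism `S ⟶ T`: a morphism of complexes whose components `f k` and
`f (k+1)` are isomorphisms for some `k ∈ {0,…,n+1}`, indices taken modulo `n+2`. -/
def ExistsWeakIso (n : ℕ) (S T : NSeq M) : Prop :=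
  ∃ f : ∀ i, S.X i ⟶ T.X i, IsNSeqHom n S T f ∧
    ((∃ k ≤ n, IsIso (f k) ∧ IsIso (f (k + 1))) ∨ (IsIso (f (n + 1)) ∧ IsIso (f 0)))

/-- The objects of the mapping cone `X⁰ → X¹ ⊞ Y⁰ → ⋯ → Xⁿ ⊞ Y^{n-1} → Yⁿ` of a morphism of
complexes indexed by `0, …, n`. -/
noncomputable def coneX (n : ℕ) (S T : NSeq M) (i : ℕ) : M :=
  if i = 0 then S.X 0 else if i ≤ n then S.X i ⊞ T.X (i - 1) else T.X n

lemma coneX_zero (n : ℕ) (S T : NSeq M) : coneX n S T 0 = S.X 0 := by simp [coneX]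

lemma coneX_mid (n : ℕ) (S T : NSeq M) {i : ℕ} (h0 : i ≠ 0) (h1 : i ≤ n) :
    coneX n S T i = (S.X i ⊞ T.X (i - 1)) := by simp [coneX, h0, h1]

lemma coneX_top (n : ℕ) (S T : NSeq M) {i : ℕ} (h : n < i) :
    coneX n S T i = T.X n := by
  have h0 : i ≠ 0 := by omega
  have h1 : ¬ i ≤ n := by omega
  simp [coneX, h0, h1]

/-- The differentials of the mapping cone, given in matrix form by
`d_C^k = ((-d_X^{k+1}, 0), (f^{k+1}, d_Y^k))`. -/
noncomputable def coneD (n : ℕ) (S T : NSeq M) (f : ∀ i, S.X i ⟶ T.X i) (i : ℕ) :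
    coneX n S T i ⟶ coneX n S T (i + 1) :=
  if h0 : i = 0 then
    (if h1 : 1 ≤ n then
      eqToHom (show coneX n S T i = S.X 0 by subst h0; exact coneX_zero n S T) ≫
        biprod.lift (-(S.d 0)) (f 0) ≫
        eqToHom (show (S.X 1 ⊞ T.X 0) = coneX n S T (i + 1) by
          subst h0; exact (coneX_mid n S T one_ne_zero h1).symm)
    else 0)
  else if h1 : i + 1 ≤ n then
    eqToHom (coneX_mid n S T h0 (by omega)) ≫
      biprod.lift (biprod.fst ≫ (-(S.d i)))
        (biprod.fst ≫ f i + biprod.snd ≫ (T.d (i - 1) ≫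
          eqToHom (congrArg T.X (by omega : i - 1 + 1 = i)))) ≫
      eqToHom ((coneX_mid n S T (Nat.succ_ne_zero i) h1).symm)
  else if h2 : i = n then
    eqToHom (coneX_mid n S T h0 (by omega)) ≫
      biprod.desc (f i) (T.d (i - 1) ≫ eqToHom (congrArg T.X (by omega : i - 1 + 1 = i))) ≫
      eqToHom (show T.X i = coneX n S T (i + 1) by
        rw [h2]; exact (coneX_top n S T (by omega)).symm)
  else 0

/-- The mapping cone, as an `NSeq`. -/
noncomputable def cone (n : ℕ) (S T : NSeq M) (f : ∀ i, S.X i ⟶ T.X i) : NSeq M :=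
  ⟨coneX n S T, coneD n S T f⟩

/-- The diagram determined by `f` is an `n`-pushout: the mapping cone is a right `n`-exact
sequence. -/
def IsNPushout (n : ℕ) (S T : NSeq M) (f : ∀ i, S.X i ⟶ T.X i) : Prop :=
  RightNExact n (cone n S T f)

/-- The diagram determined by `f` is an `n`-pullback: the mapping cone is a left `n`-exact
sequence. -/
def IsNPullback (n : ℕ) (S T : NSeq M) (f : ∀ i, S.X i ⟶ T.X i) : Prop :=
  LeftNExact n (cone n S T f)

/-- The shift of a sequence, `(shift S).X i = S.X (i+1)`. -/
def NSeq.shift (S : NSeq M) : NSeq M :=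
  ⟨fun i => S.X (i + 1), fun i => S.d (i + 1)⟩

/-- `g` is an `𝒳`-admissible monomorphism: it occurs as the first differential of a member
of `𝒳`. -/
def AdmMono (𝒳 : Set (NSeq M)) {A B : M} (g : A ⟶ B) : Prop :=
  ∃ Z ∈ 𝒳, ∃ (h0 : Z.X 0 = A) (h1 : Z.X 1 = B), Z.d 0 = eqToHom h0 ≫ g ≫ eqToHom h1.symm

/-- `g` is an `𝒳`-admissible epimorphism: it occurs as the last differential of a member
of `𝒳`. -/
def AdmEpi (n : ℕ) (𝒳 : Set (NSeq M)) {A B : M} (g : A ⟶ B) : Prop :=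
  ∃ Z ∈ 𝒳, ∃ (h0 : Z.X n = A) (h1 : Z.X (n + 1) = B),
    Z.d n = eqToHom h0 ≫ g ≫ eqToHom h1.symm

/-- `𝒳` is an `n`-exact structure on `M`: a class of `n`-exact sequences, closed under weak
isomorphisms, satisfying the axioms (E0), (E1), (E1ᵒᵖ), (E2) and (E2ᵒᵖ). -/
structure IsNExactStructure (n : ℕ) (𝒳 : Set (NSeq M)) : Prop where
  /-- members of `𝒳` are `n`-exact sequences -/
  nExact : ∀ Z ∈ 𝒳, IsNExactSeq n Z
  /-- `𝒳` is closed under weak isomorphisms -/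
  weakIsoClosed : ∀ Z ∈ 𝒳, ∀ T : NSeq M, IsNExactSeq n T →
      (ExistsWeakIso n Z T ∨ ExistsWeakIso n T Z) → T ∈ 𝒳
  /-- (E0): the zero sequence `0 → 0 → ⋯ → 0` is admissible -/
  zero_mem : ∃ Z ∈ 𝒳, ∀ i ≤ n + 1, IsZero (Z.X i)
  /-- (E1): admissible monomorphisms are closed under composition -/
  monoComp : ∀ {A B C : M} (g₁ : A ⟶ B) (g₂ : B ⟶ C),
      AdmMono 𝒳 g₁ → AdmMono 𝒳 g₂ → AdmMono 𝒳 (g₁ ≫ g₂)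
  /-- (E1ᵒᵖ): admissible epimorphisms are closed under composition -/
  epiComp : ∀ {A B C : M} (g₁ : A ⟶ B) (g₂ : B ⟶ C),
      AdmEpi n 𝒳 g₁ → AdmEpi n 𝒳 g₂ → AdmEpi n 𝒳 (g₁ ≫ g₂)
  /-- (E2): existence of `n`-pushouts along morphisms out of `X⁰`, with `d_Y⁰` an admissible
  monomorphism -/
  pushout : ∀ Z ∈ 𝒳, ∀ (W : M) (f0 : Z.X 0 ⟶ W),
      ∃ (T : NSeq M) (f : ∀ i, Z.X i ⟶ T.X i) (h : T.X 0 = W),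
        f 0 = f0 ≫ eqToHom h.symm ∧
        (∀ i, i + 1 ≤ n → Z.d i ≫ f (i + 1) = f i ≫ T.d i) ∧
        IsNPushout n Z T f ∧ AdmMono 𝒳 (T.d 0)
  /-- (E2ᵒᵖ): existence of `n`-pullbacks along morphisms into `Y^{n+1}`, with `d_X^n` an
  admissible epimorphism -/
  pullback : ∀ Z ∈ 𝒳, ∀ (A : M) (g : A ⟶ Z.X (n + 1)),
      ∃ (T : NSeq M) (f : ∀ i, T.X i ⟶ Z.X (i + 1)) (h : T.X n = A),
        f n = eqToHom h ≫ g ∧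
        (∀ i, i + 1 ≤ n → T.d i ≫ f (i + 1) = f i ≫ Z.d (i + 1)) ∧
        IsNPullback n T Z.shift f ∧ AdmEpi n 𝒳 (T.d (n - 1))

end NExactCat

namespace NExactCat

variable {M : Type u} [SmallCategory M] [Preadditive M] [HasFiniteBiproducts M]

/-- A functor `F ∈ Mod(M)` is weakly effaceable if every element of `F(X)` is killed by
restriction along some admissible epimorphism `V ⟶ X`. -/
def WeaklyEffaceable (n : ℕ) (𝒳 : Set (NSeq M)) (F : Mᵒᵖ ⥤ AddCommGrpCat.{u}) : Prop :=
  ∀ (X : M) (x : F.obj (op X)), ∃ (V : M) (g : V ⟶ X),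
    AdmEpi n 𝒳 g ∧ F.map g.op x = 0

/-- A functor `F ∈ Mod(M)` is `Eff`-closed (lies in `L₁(M)`) if for every admissible `n`-exact
sequence `Z` the sequence `0 → F(Z^{n+1}) → F(Zⁿ) → F(Z^{n-1})` of abelian groups is exact. -/
def EffClosed (n : ℕ) (𝒳 : Set (NSeq M)) (F : Mᵒᵖ ⥤ AddCommGrpCat.{u}) : Prop :=
  ∀ Z ∈ 𝒳, ∀ j : ℕ, j + 1 = n →
    Function.Injective (fun x : F.obj (op (Z.X (n + 1))) => F.map (Z.d n).op x) ∧
    Function.Exact (fun x : F.obj (op (Z.X (j + 2))) => F.map (Z.d (j + 1)).op x)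
      (fun x : F.obj (op (Z.X (j + 1))) => F.map (Z.d j).op x)

/-- A complex `0 → H_A → F¹ → ⋯ → Fⁿ → H_B → 0` in `Mod(M)` whose end terms are the
representable functors of `A` and `B`. -/
structure RepSeq (M : Type u) [SmallCategory M] [Preadditive M] (n : ℕ) (A B : M) where
  F : ℕ → (Mᵒᵖ ⥤ AddCommGrpCat.{u})
  τ : ∀ i, F i ⟶ F (i + 1)
  hF0 : F 0 = preadditiveYoneda.obj A
  hFtop : F (n + 1) = preadditiveYoneda.obj B
  isComplex : ∀ i, i + 1 ≤ n → τ i ≫ τ (i + 1) = 0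

/-- Every homology object of the complex `0 → F 0 → ⋯ → F (n+1) → 0` (homology being
computed objectwise, as in the functor category `Mod(M)`) is weakly effaceable. -/
def RepSeq.HomologyWeaklyEffaceable {n : ℕ} {A B : M} (𝒳 : Set (NSeq M))
    (S : RepSeq M n A B) : Prop :=
  (∀ (X : M) (x : (S.F 0).obj (op X)), (S.τ 0).app (op X) x = 0 →
    ∃ (V : M) (g : V ⟶ X), AdmEpi n 𝒳 g ∧ (S.F 0).map g.op x = 0) ∧
  (∀ i, i + 1 ≤ n → ∀ (X : M) (x : (S.F (i + 1)).obj (op X)),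
    (S.τ (i + 1)).app (op X) x = 0 →
    ∃ (V : M) (g : V ⟶ X), AdmEpi n 𝒳 g ∧
      ∃ y : (S.F i).obj (op V), (S.τ i).app (op V) y = (S.F (i + 1)).map g.op x) ∧
  (∀ (X : M) (x : (S.F (n + 1)).obj (op X)),
    ∃ (V : M) (g : V ⟶ X), AdmEpi n 𝒳 g ∧
      ∃ y : (S.F n).obj (op V), (S.τ n).app (op V) y = (S.F (n + 1)).map g.op x)

/-- `S` is an `n`-fold extension of `H_B` by `H_A` in the localization of `Mod(M)` at the
weakly effaceable functors: its middle terms are additive and `Eff`-closed, and every homology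
object of `S` is weakly effaceable. -/
def RepSeq.Good {n : ℕ} {A B : M} (𝒳 : Set (NSeq M)) (S : RepSeq M n A B) : Prop :=
  (∀ i, 1 ≤ i → i ≤ n → (S.F i).Additive ∧ EffClosed n 𝒳 (S.F i)) ∧
  S.HomologyWeaklyEffaceable 𝒳

/-- A morphism of such complexes restricting to the identity on the two end terms. -/
def RepSeqConnects {n : ℕ} {A B : M} (S T : RepSeq M n A B) : Prop :=
  ∃ φ : ∀ i, S.F i ⟶ T.F i,
    (∀ i, i ≤ n → S.τ i ≫ φ (i + 1) = φ i ≫ T.τ i) ∧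
    φ 0 = eqToHom (S.hF0.trans T.hF0.symm) ∧
    φ (n + 1) = eqToHom (S.hFtop.trans T.hFtop.symm)

/-- One step of the zigzag: both complexes are of the required form and there is a morphism
between them (in either direction) restricting to the identity on the end terms. -/
def RepSeqStep {n : ℕ} {A B : M} (𝒳 : Set (NSeq M)) (S T : RepSeq M n A B) : Prop :=
  S.Good 𝒳 ∧ T.Good 𝒳 ∧ (RepSeqConnects S T ∨ RepSeqConnects T S)

/-- The complex `0 → H_{Z⁰} → H_{Z¹} → ⋯ → H_{Z^{n+1}} → 0` of representable functors
associated with a complex `Z` in `M`. -/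
def repSeqOf (n : ℕ) (Z : NSeq M) {A B : M} (h0 : Z.X 0 = A) (htop : Z.X (n + 1) = B)
    (hcx : Z.IsComplex n) : RepSeq M n A B where
  F i := preadditiveYoneda.obj (Z.X i)
  τ i := preadditiveYoneda.map (Z.d i)
  hF0 := by show preadditiveYoneda.obj (Z.X 0) = _; rw [h0]
  hFtop := by show preadditiveYoneda.obj (Z.X (n + 1)) = _; rw [htop]
  isComplex i hi := by
    rw [← Functor.map_comp, hcx i hi]
    exact Functor.map_zero _ _ _

end NExactCat

namespace NExactCat

section Complexes

variable {M : Type u} [SmallCategory M] [Preadditive M]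

/-- A commutative square between the last differentials extends to a morphism of complexes
if the target is left `n`-exact. -/
lemma LeftNExact.exists_hom {n : ℕ} {P W : NSeq M} (hW : LeftNExact n W) (hP : P.IsComplex n)
    (a : P.X n ⟶ W.X n) (b : P.X (n + 1) ⟶ W.X (n + 1)) (hab : P.d n ≫ b = a ≫ W.d n) :
    ∃ f : ∀ i, P.X i ⟶ W.X i, IsNSeqHom n P W f ∧ f n = a ∧ f (n + 1) = b := by
  suffices ∀ m ≤ n, ∃ f : ∀ i, P.X i ⟶ W.X i,
      (∀ i, n ≤ i + m → i ≤ n → P.d i ≫ f (i + 1) = f i ≫ W.d i) ∧ f n = a ∧ f (n + 1) = b by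
    obtain ⟨f, hf, hfa, hfb⟩ := this n le_rfl
    exact ⟨f, fun i hi => hf i (by omega) hi, hfa, hfb⟩
  intro m
  induction m with
  | zero =>
    intro _
    refine ⟨Function.update (Function.update 0 n a) (n + 1) b, fun i h1 h2 => ?_, ?_, ?_⟩
    · obtain rfl : i = n := by omega
      simpa using hab
    · simp
    · simp
  | succ m ih =>
    intro hm
    obtain ⟨f, hf, hfa, hfb⟩ := ih (by omega)
    obtain ⟨j, hj⟩ : ∃ j, n = j + m + 1 := ⟨n - m - 1, by omega⟩
    have hk : (P.d j ≫ f (j + 1)) ≫ W.d (j + 1) = 0 := by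
      rw [Category.assoc, ← hf (j + 1) (by omega) (by omega), ← Category.assoc,
        hP j (by omega), zero_comp]
    obtain ⟨v, hv⟩ := (hW.2 _ j (by omega) _).1 hk
    refine ⟨Function.update f j v, fun i h1 h2 => ?_, ?_, ?_⟩
    · by_cases hij : i = j
      · subst hij
        simpa using hv.symm
      · rw [Function.update_of_ne hij, Function.update_of_ne (by omega)]
        exact hf i (by omega) h2
    · rw [Function.update_of_ne (by omega), hfa]
    · rw [Function.update_of_ne (by omega), hfb]

/-- If the source is right `n`-exact, a morphism of complexes whose first component factors
through the first differential is null-homotopic. -/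
lemma RightNExact.exists_homotopy {n : ℕ} {P W : NSeq M} (hP : RightNExact n P)
    (hW : W.IsComplex n) {a : ∀ i, P.X i ⟶ W.X i} (ha : IsNSeqHom n P W a)
    (t : P.X 1 ⟶ W.X 0) (ht : a 0 = P.d 0 ≫ t) :
    ∃ s : ∀ i, P.X (i + 1) ⟶ W.X i, a 0 = P.d 0 ≫ s 0 ∧
      (∀ i < n, a (i + 1) = P.d (i + 1) ≫ s (i + 1) + s i ≫ W.d i) ∧
      a (n + 1) = s n ≫ W.d n := by
  have step : ∀ m ≤ n, ∃ s : ∀ i, P.X (i + 1) ⟶ W.X i, a 0 = P.d 0 ≫ s 0 ∧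
      (∀ i < m, a (i + 1) = P.d (i + 1) ≫ s (i + 1) + s i ≫ W.d i) ∧
      P.d m ≫ s m ≫ W.d m = P.d m ≫ a (m + 1) := by
    intro m
    induction m with
    | zero =>
      intro _
      refine ⟨Function.update 0 0 t, by simpa using ht, by simp, ?_⟩
      rw [ha 0 (by omega), ht]
      simp
    | succ m ih =>
      intro hm
      obtain ⟨s, hs0, hs, hsm⟩ := ih (by omega)
      have hk : P.d m ≫ (a (m + 1) - s m ≫ W.d m) = 0 := by
        rw [Preadditive.comp_sub, hsm, sub_self]
      obtain ⟨v, hv⟩ := (hP.2 _ m (by omega) _).1 hk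
      replace hv : P.d (m + 1) ≫ v = a (m + 1) - s m ≫ W.d m := hv
      refine ⟨Function.update s (m + 1) v, ?_, fun i hi => ?_, ?_⟩
      · rwa [Function.update_of_ne (by omega)]
      · by_cases him : i = m
        · subst him
          simp [hv]
        · rw [Function.update_of_ne (by omega), Function.update_of_ne (by omega)]
          exact hs i (by omega)
      · rw [Function.update_self, ← Category.assoc, hv, Preadditive.sub_comp, Category.assoc,
          hW m hm, comp_zero, sub_zero, ha (m + 1) hm]
  obtain ⟨s, hs0, hs, hsn⟩ := step n le_rfl
  exact ⟨s, hs0, hs, (hP.1 _ hsn).symm⟩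

end Complexes

section AdmissibleEpi

variable {M : Type u} [SmallCategory M] [Preadditive M] [HasFiniteBiproducts M]
  {n : ℕ} {𝒳 : Set (NSeq M)}

/-- Admissible epimorphisms can be pulled back along arbitrary morphisms. -/
lemma IsNExactStructure.exists_lift (h𝒳 : IsNExactStructure n 𝒳) (hn : 1 ≤ n) {A B X : M}
    {g : A ⟶ B} (hg : AdmEpi n 𝒳 g) (f : X ⟶ B) :
    ∃ (Y : M) (p : Y ⟶ X) (q : Y ⟶ A), AdmEpi n 𝒳 p ∧ q ≫ g = p ≫ f := by
  obtain ⟨P, hP, rfl, rfl, hd⟩ := hg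
  obtain ⟨m, rfl⟩ : ∃ m, n = m + 1 := ⟨n - 1, by omega⟩
  obtain ⟨T, a, rfl, han, ha, -, hT⟩ := h𝒳.pullback P hP X f
  refine ⟨_, T.d m, a m, hT, ?_⟩
  have := ha m le_rfl
  rw [han] at this
  simpa [hd] using this.symm

/-- Every object is the target of an admissible epimorphism. -/
lemma IsNExactStructure.exists_admEpi (h𝒳 : IsNExactStructure n 𝒳) (hn : 1 ≤ n) (X : M) :
    ∃ (Y : M) (p : Y ⟶ X), AdmEpi n 𝒳 p := by
  obtain ⟨P, hP, -⟩ := h𝒳.zero_mem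
  obtain ⟨Y, p, -, hp, -⟩ := h𝒳.exists_lift hn (g := P.d n)
    ⟨P, hP, rfl, rfl, by simp⟩ (0 : X ⟶ _)
  exact ⟨Y, p, hp⟩

/-- The topology on `M` whose covering sieves are those containing an admissible
epimorphism. -/
def admTopology (h𝒳 : IsNExactStructure n 𝒳) (hn : 1 ≤ n) : GrothendieckTopology M where
  sieves X := { S | ∃ (Y : M) (p : Y ⟶ X), AdmEpi n 𝒳 p ∧ S p }
  top_mem' X := by
    obtain ⟨Y, p, hp⟩ := h𝒳.exists_admEpi hn X
    exact ⟨Y, p, hp, trivial⟩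
  pullback_stable' X Y S f := by
    rintro ⟨V, g, hg, hS⟩
    obtain ⟨V', p, q, hp, hq⟩ := h𝒳.exists_lift hn hg f
    refine ⟨V', p, hp, ?_⟩
    change S (p ≫ f)
    rw [← hq]
    exact S.downward_closed hS q
  transitive' X S := by
    rintro ⟨V, g, hg, hS⟩ R hR
    obtain ⟨V', p, hp, hRp⟩ := hR hS
    exact ⟨V', p ≫ g, h𝒳.epiComp _ _ hp hg, hRp⟩

end AdmissibleEpi

end NExactCat

namespace NExactCat

section Yoneda

variable {M : Type u} [SmallCategory M] [Preadditive M]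

/-- The morphism `H_X ⟶ F` corresponding to an element of `F(X)`, for an additive `F`. -/
def yonedaHom (F : Mᵒᵖ ⥤ AddCommGrpCat.{u}) [F.Additive] {X : M} (x : F.obj (op X)) :
    preadditiveYoneda.obj X ⟶ F where
  app V := AddCommGrpCat.ofHom (AddMonoidHom.mk' (fun f : V.unop ⟶ X => F.map f.op x)
    (fun f g => congrArg (fun t => (ConcreteCategory.hom t) x)
      (F.map_add (f := Quiver.Hom.op (show V.unop ⟶ X from f))
        (g := Quiver.Hom.op (show V.unop ⟶ X from g)))))
  naturality V W f := by
    ext (g : V.unop ⟶ X)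
    change F.map (f.unop ≫ g).op x = F.map f (F.map g.op x)
    simp

lemma yonedaHom_app (F : Mᵒᵖ ⥤ AddCommGrpCat.{u}) [F.Additive] {X V : M} (x : F.obj (op X))
    (f : V ⟶ X) : (yonedaHom F x).app (op V) f = F.map f.op x := rfl

lemma app_eq_map_app_id {F : Mᵒᵖ ⥤ AddCommGrpCat.{u}} {X V : M}
    (c : preadditiveYoneda.obj X ⟶ F) (f : V ⟶ X) :
    c.app (op V) f = F.map f.op (c.app (op X) (𝟙 X)) := by
  have h := NatTrans.naturality_apply c f.op (𝟙 X : X ⟶ X)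
  rw [← h]
  exact congrArg (c.app (op V)) (Category.comp_id f).symm

lemma yonedaObj_hom_ext {F : Mᵒᵖ ⥤ AddCommGrpCat.{u}} {X : M}
    {c c' : preadditiveYoneda.obj X ⟶ F} (h : c.app (op X) (𝟙 X) = c'.app (op X) (𝟙 X)) :
    c = c' := by
  ext V (f : V.unop ⟶ X)
  exact (app_eq_map_app_id c f).trans ((congrArg _ h).trans (app_eq_map_app_id c' f).symm)

lemma yonedaHom_app_id (F : Mᵒᵖ ⥤ AddCommGrpCat.{u}) [F.Additive] {X : M} (x : F.obj (op X)) :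
    (yonedaHom F x).app (op X) (𝟙 X) = x := by
  rw [yonedaHom_app]
  simp

lemma preadditiveYoneda_map_add {X Y : M} (f g : X ⟶ Y) :
    (preadditiveYoneda.map (f + g)) = preadditiveYoneda.map f + preadditiveYoneda.map g := by
  ext V (h : V.unop ⟶ X)
  exact Preadditive.comp_add _ _ _ h f g

lemma preadditiveYoneda_map_zero (X Y : M) : preadditiveYoneda.map (0 : X ⟶ Y) = 0 := by
  ext V (h : V.unop ⟶ X)
  exact comp_zero

/-- The functor `V ↦ Hom(H_V, F)`; it is the largest additive approximation of `F`. -/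
def additivization (F : Mᵒᵖ ⥤ AddCommGrpCat.{u}) : Mᵒᵖ ⥤ AddCommGrpCat.{u} where
  obj V := AddCommGrpCat.of (preadditiveYoneda.obj V.unop ⟶ F)
  map f := AddCommGrpCat.ofHom (AddMonoidHom.mk' (fun c => preadditiveYoneda.map f.unop ≫ c)
    (fun c c' => Preadditive.comp_add _ _ _ _ c c'))
  map_id V := by
    refine AddCommGrpCat.ext fun (c : preadditiveYoneda.obj V.unop ⟶ F) => ?_
    change preadditiveYoneda.map (𝟙 _) ≫ c = c
    rw [CategoryTheory.Functor.map_id, Category.id_comp]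
  map_comp {V _ _} f g := by
    refine AddCommGrpCat.ext fun (c : preadditiveYoneda.obj V.unop ⟶ F) => ?_
    change preadditiveYoneda.map (g.unop ≫ f.unop) ≫ c = _
    rw [Functor.map_comp, Category.assoc]
    rfl

instance (F : Mᵒᵖ ⥤ AddCommGrpCat.{u}) : (additivization F).Additive where
  map_add {V W f g} := by
    refine AddCommGrpCat.ext fun (c : preadditiveYoneda.obj V.unop ⟶ F) => ?_
    change preadditiveYoneda.map (f.unop + g.unop) ≫ c = _
    rw [preadditiveYoneda_map_add, Preadditive.add_comp]
    rfl

/-- Evaluation at the identities. -/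
def additivizationEval (F : Mᵒᵖ ⥤ AddCommGrpCat.{u}) : additivization F ⟶ F where
  app V := AddCommGrpCat.ofHom (AddMonoidHom.mk'
    (fun c : preadditiveYoneda.obj V.unop ⟶ F => c.app V (𝟙 V.unop)) (fun _ _ => rfl))
  naturality V W f := by
    ext (c : preadditiveYoneda.obj V.unop ⟶ F)
    change c.app W (𝟙 W.unop ≫ f.unop) = F.map f (c.app V (𝟙 V.unop))
    rw [Category.id_comp]
    exact app_eq_map_app_id c f.unop

/-- A morphism from an additive functor `G` to `F` factors through the additivization. -/
def additivizationLift {F G : Mᵒᵖ ⥤ AddCommGrpCat.{u}} [G.Additive] (v : G ⟶ F) :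
    G ⟶ additivization F where
  app V := AddCommGrpCat.ofHom (AddMonoidHom.mk'
    (fun x : G.obj (op V.unop) => yonedaHom G x ≫ v) (fun x y => by
      apply yonedaObj_hom_ext
      change v.app _ ((yonedaHom G (x + y)).app _ (𝟙 V.unop)) =
        v.app _ ((yonedaHom G x).app _ (𝟙 V.unop)) + v.app _ ((yonedaHom G y).app _ (𝟙 V.unop))
      rw [yonedaHom_app_id, yonedaHom_app_id, yonedaHom_app_id, map_add]))
  naturality V W f := by
    ext (x : G.obj (op V.unop))
    apply yonedaObj_hom_ext
    change v.app _ ((yonedaHom G (G.map f x)).app _ (𝟙 W.unop)) =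
      v.app _ ((yonedaHom G x).app _ (𝟙 W.unop ≫ f.unop))
    rw [yonedaHom_app_id, Category.id_comp]
    rfl

lemma additivizationLift_eval {F G : Mᵒᵖ ⥤ AddCommGrpCat.{u}} [G.Additive] (v : G ⟶ F) :
    additivizationLift v ≫ additivizationEval F = v := by
  ext V x
  change v.app V ((yonedaHom G (X := V.unop) x).app _ (𝟙 V.unop)) = v.app V x
  rw [yonedaHom_app_id]

lemma additivization_hom_ext {F G : Mᵒᵖ ⥤ AddCommGrpCat.{u}} {u v : G ⟶ additivization F}
    (h : u ≫ additivizationEval F = v ≫ additivizationEval F) : u = v := by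
  ext V x
  exact yonedaObj_hom_ext (congrArg (fun w : G ⟶ F => w.app V x) h)

end Yoneda

end NExactCat

namespace NExactCat

section EffInjective

variable {M : Type u} [SmallCategory M] {n : ℕ} {𝒳 : Set (NSeq M)}

/-- `F ⟶ G ⟶ H` is exact at `G` up to weakly effaceable functors. -/
def LocallyExact (n : ℕ) (𝒳 : Set (NSeq M)) {F G H : Mᵒᵖ ⥤ AddCommGrpCat.{u}}
    (α : F ⟶ G) (β : G ⟶ H) : Prop :=
  ∀ (X : M) (x : G.obj (op X)), β.app (op X) x = 0 →
    ∃ (V : M) (g : V ⟶ X), AdmEpi n 𝒳 g ∧ ∃ y : F.obj (op V), α.app (op V) y = G.map g.op x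

/-- `F` has no nonzero weakly effaceable subfunctor. -/
def Separated (n : ℕ) (𝒳 : Set (NSeq M)) (F : Mᵒᵖ ⥤ AddCommGrpCat.{u}) : Prop :=
  ∀ (V X : M) (g : V ⟶ X), AdmEpi n 𝒳 g → ∀ x : F.obj (op X), F.map g.op x = 0 → x = 0

lemma Separated.eq_zero_of_locallyExact {F G J : Mᵒᵖ ⥤ AddCommGrpCat.{u}}
    (hJ : Separated n 𝒳 J) {α : F ⟶ G} {u : G ⟶ J} (hu : α ≫ u = 0) {X V : M} {g : V ⟶ X}
    (hg : AdmEpi n 𝒳 g) {x : G.obj (op X)} {y : F.obj (op V)}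
    (hy : α.app (op V) y = G.map g.op x) : u.app (op X) x = 0 := by
  refine hJ V X g hg _ ?_
  rw [← NatTrans.naturality_apply, ← hy]
  exact congrArg (fun w : F ⟶ J => w.app (op V) y) hu

lemma Separated.hom_eq_zero {F G J : Mᵒᵖ ⥤ AddCommGrpCat.{u}}
    (hJ : Separated n 𝒳 J) {α : F ⟶ G} {u : G ⟶ J} (hu : α ≫ u = 0)
    (hα : ∀ (X : M) (x : G.obj (op X)), ∃ (V : M) (g : V ⟶ X), AdmEpi n 𝒳 g ∧
      ∃ y : F.obj (op V), α.app (op V) y = G.map g.op x) : u = 0 := by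
  ext X x
  obtain ⟨V, g, hg, y, hy⟩ := hα X.unop x
  exact hJ.eq_zero_of_locallyExact hu hg hy

/-- An injective separated functor extends morphisms along locally exact sequences. -/
lemma Separated.exists_desc_of_injective {F G H J : Mᵒᵖ ⥤ AddCommGrpCat.{u}}
    (hJ : Separated n 𝒳 J) [Injective J] (α : F ⟶ G) (β : G ⟶ H)
    (hαβ : LocallyExact n 𝒳 α β) (u : G ⟶ J) (hu : α ≫ u = 0) : ∃ v : H ⟶ J, β ≫ v = u := by
  have hk : kernel.ι β ≫ u = 0 := by
    ext X x
    obtain ⟨V, g, hg, y, hy⟩ := hαβ X.unop ((kernel.ι β).app X x)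
      (congrArg (fun w : kernel β ⟶ H => w.app X x) (kernel.condition β))
    exact hJ.eq_zero_of_locallyExact hu hg hy
  have hS : (ShortComplex.mk (kernel.ι β) β (kernel.condition β)).Exact :=
    ShortComplex.exact_of_f_is_kernel _ (kernelIsKernel β)
  exact ⟨hS.descToInjective u hk, hS.comp_descToInjective u hk⟩

variable [Preadditive M]

/-- A separated functor which is injective relative to locally exact sequences of additive
functors. -/
structure EffInjective (n : ℕ) (𝒳 : Set (NSeq M)) (J : Mᵒᵖ ⥤ AddCommGrpCat.{u}) : Prop where
  additive : J.Additive
  separated : Separated n 𝒳 J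
  exists_desc : ∀ {F G H : Mᵒᵖ ⥤ AddCommGrpCat.{u}} [H.Additive] (α : F ⟶ G) (β : G ⟶ H),
    LocallyExact n 𝒳 α β → ∀ u : G ⟶ J, α ≫ u = 0 → ∃ v : H ⟶ J, β ≫ v = u

/-- The additivization of a separated injective functor is `Eff`-injective. -/
lemma effInjective_additivization {I : Mᵒᵖ ⥤ AddCommGrpCat.{u}} [Injective I]
    (hI : Separated n 𝒳 I) (hlift : ∀ {A B X : M} {g : A ⟶ B}, AdmEpi n 𝒳 g → ∀ f : X ⟶ B,
      ∃ (Y : M) (p : Y ⟶ X) (q : Y ⟶ A), AdmEpi n 𝒳 p ∧ q ≫ g = p ≫ f) :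
    EffInjective n 𝒳 (additivization I) where
  additive := inferInstance
  separated V X g hg x hx := by
    refine hI.hom_eq_zero (α := preadditiveYoneda.map g) hx fun Y (f : Y ⟶ X) => ?_
    obtain ⟨Y', p, q, hp, hq⟩ := hlift hg f
    exact ⟨Y', p, hp, q, hq⟩
  exists_desc α β hαβ u hu := by
    obtain ⟨v, hv⟩ := hI.exists_desc_of_injective α β hαβ (u ≫ additivizationEval I)
      (by rw [← Category.assoc, hu, zero_comp])
    refine ⟨additivizationLift v, additivization_hom_ext ?_⟩
    rw [Category.assoc, additivizationLift_eval, hv]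

end EffInjective

section Embedding

variable {M : Type u} [SmallCategory M] [Preadditive M] [HasFiniteBiproducts M]
  {n : ℕ} {𝒳 : Set (NSeq M)}

/-- Every separated additive functor embeds into an `Eff`-injective functor. -/
lemma Separated.exists_effInjective {G : Mᵒᵖ ⥤ AddCommGrpCat.{u}} [G.Additive]
    (hG : Separated n 𝒳 G) (h𝒳 : IsNExactStructure n 𝒳) (hn : 1 ≤ n) :
    ∃ (J : Mᵒᵖ ⥤ AddCommGrpCat.{u}) (ι : G ⟶ J), EffInjective n 𝒳 J ∧
      ∀ (X : M) (x : G.obj (op X)), ι.app (op X) x = 0 → x = 0 := by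
  let K := admTopology h𝒳 hn
  let I := Injective.under ((presheafToSheaf K AddCommGrpCat.{u}).obj G)
  have : Injective ((sheafToPresheaf K AddCommGrpCat.{u}).obj I) :=
    Injective.injective_of_adjoint (sheafificationAdjunction K AddCommGrpCat.{u}) I
  have hI : Separated n 𝒳 ((sheafToPresheaf K AddCommGrpCat.{u}).obj I) := by
    intro V X g hg x hx
    have hsh : Presieve.IsSheaf K (I.obj ⋙ forget AddCommGrpCat.{u}) :=
      (isSheaf_iff_isSheaf_of_type K _).1
        ((Presheaf.isSheaf_iff_isSheaf_forget K I.obj (forget AddCommGrpCat.{u})).1 I.property)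
    refine (hsh.isSeparated (Sieve.generate (Presieve.singleton g))
      ⟨V, g, hg, V, 𝟙 V, g, ⟨⟩, Category.id_comp g⟩).ext ?_
    rintro Y f ⟨V', p, q, ⟨⟩, rfl⟩
    change I.obj.map (p ≫ g).op x = I.obj.map (p ≫ g).op 0
    rw [op_comp, Functor.map_comp, ConcreteCategory.comp_apply, ConcreteCategory.comp_apply,
      map_zero]
    exact congrArg _ hx
  let j : G ⟶ (sheafToPresheaf K AddCommGrpCat.{u}).obj I :=
    toSheafify K G ≫ (sheafToPresheaf K _).map (Injective.ι _)
  refine ⟨_, additivizationLift j, effInjective_additivization hI (h𝒳.exists_lift hn), ?_⟩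
  intro X x hx
  have hx' : j.app (op X) x = 0 := by
    rw [← additivizationLift_eval j]
    exact (congrArg ((additivizationEval _).app (op X)) hx).trans (map_zero _)
  have hmono : Mono ((sheafToPresheaf K AddCommGrpCat.{u}).map
      (Injective.ι ((presheafToSheaf K AddCommGrpCat.{u}).obj G))) := inferInstance
  have hx'' : (toSheafify K G).app (op X) x = 0 := by
    have := (NatTrans.mono_iff_mono_app _).1 hmono (op X)
    exact (AddCommGrpCat.mono_iff_injective _).1 this (hx'.trans (map_zero _).symm)
  obtain ⟨V, g, hg, hgx⟩ := Presheaf.equalizerSieve_mem K (toSheafify K G) x 0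
    (hx''.trans (map_zero _).symm)
  exact hG V X g hg x (hgx.trans (map_zero _))

end Embedding

end NExactCat

namespace NExactCat

section Coresolution

variable {M : Type u} [SmallCategory M] {n : ℕ} {𝒳 : Set (NSeq M)}

lemma NSeq.map_map_eq_zero [Preadditive M] {P : NSeq M} (hP : P.IsComplex n)
    (F : Mᵒᵖ ⥤ AddCommGrpCat.{u}) [F.Additive] {i : ℕ} (hi : i + 1 ≤ n)
    (x : F.obj (op (P.X (i + 2)))) : F.map (P.d i).op (F.map (P.d (i + 1)).op x) = 0 := by
  rw [← ConcreteCategory.comp_apply, ← Functor.map_comp, ← op_comp, hP i hi]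
  exact congrArg (fun t => (ConcreteCategory.hom t) x)
    (F.map_zero (op (P.X (i + 2))) (op (P.X i)))

/-- `G` is separated and exact on the last `k` places of admissible `n`-exact sequences. -/
structure AcyclicUpTo (n : ℕ) (𝒳 : Set (NSeq M)) (k : ℕ) (G : Mᵒᵖ ⥤ AddCommGrpCat.{u}) :
    Prop where
  separated : Separated n 𝒳 G
  exact : ∀ P ∈ 𝒳, ∀ i < n, n ≤ i + k → ∀ x : G.obj (op (P.X (i + 1))),
    G.map (P.d i).op x = 0 → ∃ y : G.obj (op (P.X (i + 2))), G.map (P.d (i + 1)).op y = x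

/-- The cokernel of a monomorphism from an acyclic functor to a more acyclic functor is
acyclic. -/
lemma AcyclicUpTo.of_shortExact [Preadditive M] {G J Q : Mᵒᵖ ⥤ AddCommGrpCat.{u}} [J.Additive]
    {k : ℕ} (hk : k + 1 ≤ n) (h𝒳 : ∀ P ∈ 𝒳, P.IsComplex n)
    (hG : AcyclicUpTo n 𝒳 (k + 1) G) (hJ : AcyclicUpTo n 𝒳 n J) (ι : G ⟶ J) (π : J ⟶ Q)
    (hι : ∀ (X : M) (x : G.obj (op X)), ι.app (op X) x = 0 → x = 0)
    (hιπ : ι ≫ π = 0)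
    (hex : ∀ (X : M) (x : J.obj (op X)), π.app (op X) x = 0 → ∃ y, ι.app (op X) y = x)
    (hπ : ∀ (X : M) (x : Q.obj (op X)), ∃ y, π.app (op X) y = x) :
    AcyclicUpTo n 𝒳 k Q := by
  have hιπ' : ∀ (X : M) (x : G.obj (op X)), π.app (op X) (ι.app (op X) x) = 0 := fun X x =>
    congrArg (fun w : G ⟶ Q => w.app (op X) x) hιπ
  have key : ∀ P ∈ 𝒳, ∀ i, 1 ≤ i → i ≤ n → n ≤ i + k → ∀ x : Q.obj (op (P.X (i + 1))),
      Q.map (P.d i).op x = 0 → ∃ y : J.obj (op (P.X (i + 1))),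
        π.app _ y = x ∧ J.map (P.d i).op y = 0 := by
    intro P hP i hi hin hik x hx
    obtain ⟨j, rfl⟩ : ∃ j, i = j + 1 := ⟨i - 1, by omega⟩
    obtain ⟨y, rfl⟩ := hπ _ x
    obtain ⟨g, hg⟩ := hex _ (J.map (P.d (j + 1)).op y)
      ((NatTrans.naturality_apply π (P.d (j + 1)).op y).trans hx)
    obtain ⟨g', rfl⟩ := hG.exact P hP j (by omega) (by omega) g (hι _ _ (by
      rw [NatTrans.naturality_apply, hg, NSeq.map_map_eq_zero (h𝒳 P hP) J (by omega)]))
    refine ⟨y - ι.app _ g', ?_, ?_⟩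
    · rw [map_sub, hιπ', sub_zero]
    · rw [map_sub, ← NatTrans.naturality_apply, hg, sub_self]
  refine ⟨?_, fun P hP i hi hik x hx => ?_⟩
  · rintro V X g ⟨P, hP, rfl, rfl, hd⟩ x hx
    obtain rfl : P.d n = g := by simpa using hd
    obtain ⟨y, rfl, hy⟩ := key P hP n (by omega) le_rfl (by omega) x hx
    rw [hJ.separated _ _ (P.d n) ⟨P, hP, rfl, rfl, by simp⟩ y hy, map_zero]
  · obtain ⟨y, rfl, hy⟩ := key P hP i (by omega) hi.le hik x hx
    obtain ⟨z, rfl⟩ := hJ.exact P hP i hi (by omega) y hy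
    exact ⟨π.app _ z, (NatTrans.naturality_apply π (P.d (i + 1)).op z).symm⟩

/-- Prepend a functor to a sequence of functors. -/
def consObj (G : Mᵒᵖ ⥤ AddCommGrpCat.{u}) (I : ℕ → (Mᵒᵖ ⥤ AddCommGrpCat.{u})) :
    ℕ → (Mᵒᵖ ⥤ AddCommGrpCat.{u})
  | 0 => G
  | i + 1 => I i

/-- Prepend a morphism to a sequence of composable morphisms. -/
def consMap {G : Mᵒᵖ ⥤ AddCommGrpCat.{u}} {I : ℕ → (Mᵒᵖ ⥤ AddCommGrpCat.{u})}
    (ε : G ⟶ I 0) (d : ∀ i, I i ⟶ I (i + 1)) : ∀ i, consObj G I i ⟶ consObj G I (i + 1)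
  | 0 => ε
  | i + 1 => d i

variable [Preadditive M]

/-- `0 → K 0 → K 1 → ⋯ → K (k + 1)` is exact, with `Eff`-injective `K 1, …, K (k + 1)`. -/
structure IsCoresolution (n : ℕ) (𝒳 : Set (NSeq M)) (k : ℕ)
    (K : ℕ → (Mᵒᵖ ⥤ AddCommGrpCat.{u})) (δ : ∀ i, K i ⟶ K (i + 1)) : Prop where
  injective : ∀ (X : M) (x : (K 0).obj (op X)), (δ 0).app (op X) x = 0 → x = 0
  isComplex : ∀ i < k, δ i ≫ δ (i + 1) = 0
  exact : ∀ i < k, ∀ (X : M) (x : (K (i + 1)).obj (op X)), (δ (i + 1)).app (op X) x = 0 →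
    ∃ y, (δ i).app (op X) y = x
  effInjective : ∀ i ≤ k, EffInjective n 𝒳 (K (i + 1))

variable [HasFiniteBiproducts M]

/-- `Eff`-injective functors are exact on admissible `n`-exact sequences. -/
lemma EffInjective.acyclicUpTo (h𝒳 : IsNExactStructure n 𝒳) (hn : 1 ≤ n)
    {J : Mᵒᵖ ⥤ AddCommGrpCat.{u}} (hJ : EffInjective n 𝒳 J) : AcyclicUpTo n 𝒳 n J := by
  have := hJ.additive
  refine ⟨hJ.separated, fun P hP i hi _ x hx => ?_⟩
  obtain ⟨v, hv⟩ := hJ.exists_desc (preadditiveYoneda.map (P.d i))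
    (preadditiveYoneda.map (P.d (i + 1))) (fun X (f : X ⟶ P.X (i + 1)) hf => by
      obtain ⟨V, g, hg⟩ := h𝒳.exists_admEpi hn X
      obtain ⟨y, hy⟩ := ((h𝒳.nExact P hP).2.1.2 X i hi f).1 hf
      refine ⟨V, g, hg, g ≫ y, ?_⟩
      subst hy
      exact Category.assoc _ _ _) (yonedaHom J x) (yonedaObj_hom_ext (by
        change J.map (𝟙 _ ≫ P.d i).op x = 0
        rw [Category.id_comp, hx]))
  refine ⟨v.app _ (𝟙 (P.X (i + 2))), ?_⟩
  rw [← app_eq_map_app_id, ← yonedaHom_app_id J x, ← hv]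
  exact congrArg (v.app _) (Category.id_comp (P.d (i + 1))).symm

lemma acyclicUpTo_preadditiveYoneda (h𝒳 : IsNExactStructure n 𝒳) (A : M) :
    AcyclicUpTo n 𝒳 n (preadditiveYoneda.obj A) where
  separated := by
    rintro V X g ⟨P, hP, rfl, rfl, hd⟩ (x : _ ⟶ A) hx
    obtain rfl : P.d n = g := by simpa using hd
    exact (h𝒳.nExact P hP).2.2.1 A (hx.trans comp_zero.symm)
  exact P hP i hi _ x hx := ((h𝒳.nExact P hP).2.2.2 A i hi x).1 hx

lemma AcyclicUpTo.exists_coresolution (h𝒳 : IsNExactStructure n 𝒳) (hn : 1 ≤ n) {k : ℕ}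
    (hk : k ≤ n) {G : Mᵒᵖ ⥤ AddCommGrpCat.{u}} [G.Additive] (hG : AcyclicUpTo n 𝒳 k G) :
    ∃ (I : ℕ → (Mᵒᵖ ⥤ AddCommGrpCat.{u})) (ε : G ⟶ I 0) (d : ∀ i, I i ⟶ I (i + 1)),
      IsCoresolution n 𝒳 k (consObj G I) (consMap ε d) := by
  induction k generalizing G with
  | zero =>
    obtain ⟨J, ι, hJ, hι⟩ := hG.separated.exists_effInjective h𝒳 hn
    exact ⟨fun _ => J, ι, fun _ => 0, hι, by simp, by simp, fun i hi => hJ⟩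
  | succ k ih =>
    obtain ⟨J, ι, hJ, hι⟩ := hG.separated.exists_effInjective h𝒳 hn
    have := hJ.additive
    let π : J ⟶ cokernel ι := cokernel.π ι
    have hπ : ∀ (X : M) (x : (cokernel ι).obj (op X)), ∃ y, π.app (op X) y = x := fun X =>
      (AddCommGrpCat.epi_iff_surjective _).1 ((NatTrans.epi_iff_epi_app π).1 inferInstance (op X))
    have hex : ∀ (X : M) (x : J.obj (op X)), π.app (op X) x = 0 → ∃ y, ι.app (op X) y = x := by
      intro X
      have h1 : (ShortComplex.mk ι π (cokernel.condition ι)).Exact :=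
        ShortComplex.exact_of_g_is_cokernel _ (cokernelIsCokernel ι)
      exact (ShortComplex.ab_exact_iff _).1 (h1.map ((evaluation _ _).obj (op X)))
    have hQ : (cokernel ι).Additive := ⟨fun {X Y f g} => by
      refine AddCommGrpCat.ext fun x => ?_
      obtain ⟨y, rfl⟩ := hπ X.unop x
      change (cokernel ι).map (f + g) (π.app X y) =
        (cokernel ι).map f (π.app X y) + (cokernel ι).map g (π.app X y)
      rw [← NatTrans.naturality_apply, ← NatTrans.naturality_apply, ← NatTrans.naturality_apply,
        ← map_add, Functor.map_add]
      rfl⟩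
    obtain ⟨I, ε, d, h⟩ := ih (by omega) (AcyclicUpTo.of_shortExact hk
      (fun P hP => (h𝒳.nExact P hP).1) hG (hJ.acyclicUpTo h𝒳 hn) ι π hι
      (cokernel.condition ι) hex hπ)
    refine ⟨consObj J I, ι, consMap (π ≫ ε) d, hι, fun i hi => ?_, fun i hi X x hx => ?_,
      fun i hi => ?_⟩
    · match i with
      | 0 =>
        change ι ≫ π ≫ ε = 0
        rw [← Category.assoc, cokernel.condition, zero_comp]
      | 1 =>
        change (π ≫ ε) ≫ d 0 = 0
        have := h.isComplex 0 (by omega)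
        change ε ≫ d 0 = 0 at this
        rw [Category.assoc, this, comp_zero]
      | i + 2 => exact h.isComplex (i + 1) (by omega)
    · match i with
      | 0 => exact hex X x (h.injective X _ hx)
      | 1 =>
        obtain ⟨y, rfl⟩ := h.exact 0 (by omega) X x hx
        obtain ⟨z, rfl⟩ := hπ X y
        exact ⟨z, rfl⟩
      | i + 2 => exact h.exact (i + 1) (by omega) X x hx
    · match i with
      | 0 => exact hJ
      | i + 1 => exact h.effInjective i (by omega)

end Coresolution

end NExactCat

namespace NExactCat

section ExtensionClass

variable {M : Type u} [SmallCategory M] [Preadditive M] {n : ℕ} {𝒳 : Set (NSeq M)} {A B : M}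
  {K : ℕ → (Mᵒᵖ ⥤ AddCommGrpCat.{u})} {δ : ∀ i, K i ⟶ K (i + 1)}

/-- `β` is obtained from `S` by lifting the identity of `H_A` to a morphism of complexes from
`S` to the coresolution `K` of `H_A`. -/
def RepSeq.IsClass (S : RepSeq M n A B) (δ : ∀ i, K i ⟶ K (i + 1))
    (hK0 : K 0 = preadditiveYoneda.obj A) (β : preadditiveYoneda.obj B ⟶ K (n + 1)) : Prop :=
  ∃ u : ∀ i, S.F i ⟶ K i, (∀ i ≤ n, S.τ i ≫ u (i + 1) = u i ≫ δ i) ∧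
    u 0 = eqToHom (S.hF0.trans hK0.symm) ∧ u (n + 1) = eqToHom S.hFtop ≫ β

/-- The terms of `S` in positive degrees are additive. -/
def RepSeq.IsAdditive (S : RepSeq M n A B) : Prop :=
  ∀ i ≤ n, (S.F (i + 1)).Additive

lemma RepSeq.isAdditive (S : RepSeq M n A B)
    (h : ∀ i, 1 ≤ i → i ≤ n → (S.F i).Additive) : S.IsAdditive := by
  intro i hi
  rcases hi.lt_or_eq with hi | rfl
  · exact h _ (by omega) hi
  · rw [S.hFtop]
    infer_instance

lemma RepSeq.exists_desc_zero {S : RepSeq M n A B} (hS : S.HomologyWeaklyEffaceable 𝒳)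
    (hadd : S.IsAdditive) {J : Mᵒᵖ ⥤ AddCommGrpCat.{u}} (hJ : EffInjective n 𝒳 J)
    (w : S.F 0 ⟶ J) : ∃ v, S.τ 0 ≫ v = w := by
  have := hadd 0 (Nat.zero_le n)
  refine hJ.exists_desc (0 : S.F 0 ⟶ S.F 0) (S.τ 0) (fun X x hx => ?_) w zero_comp
  obtain ⟨V, g, hg, h⟩ := hS.1 X x hx
  exact ⟨V, g, hg, 0, h.symm⟩

lemma RepSeq.exists_desc_succ {S : RepSeq M n A B} (hS : S.HomologyWeaklyEffaceable 𝒳)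
    (hadd : S.IsAdditive) {J : Mᵒᵖ ⥤ AddCommGrpCat.{u}} (hJ : EffInjective n 𝒳 J)
    {i : ℕ} (hi : i + 1 ≤ n) (w : S.F (i + 1) ⟶ J) (hw : S.τ i ≫ w = 0) :
    ∃ v, S.τ (i + 1) ≫ v = w := by
  have := hadd (i + 1) hi
  exact hJ.exists_desc (S.τ i) (S.τ (i + 1)) (hS.2.1 i hi) w hw

lemma RepSeq.exists_isClass {S : RepSeq M n A B} (hS : S.HomologyWeaklyEffaceable 𝒳)
    (hadd : S.IsAdditive) (hK : IsCoresolution n 𝒳 n K δ)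
    (hK0 : K 0 = preadditiveYoneda.obj A) : ∃ β, S.IsClass δ hK0 β := by
  suffices ∀ m ≤ n + 1, ∃ u : ∀ i, S.F i ⟶ K i,
      (∀ i < m, S.τ i ≫ u (i + 1) = u i ≫ δ i) ∧ u 0 = eqToHom (S.hF0.trans hK0.symm) by
    obtain ⟨u, hu, hu0⟩ := this (n + 1) le_rfl
    exact ⟨eqToHom S.hFtop.symm ≫ u (n + 1), u, fun i hi => hu i (by omega), hu0, by simp⟩
  intro m
  induction m with
  | zero => exact fun _ => ⟨Function.update 0 0 (eqToHom (S.hF0.trans hK0.symm)), by simp⟩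
  | succ m ih =>
    intro hm
    obtain ⟨u, hu, hu0⟩ := ih (by omega)
    obtain ⟨v, hv⟩ : ∃ v : S.F (m + 1) ⟶ K (m + 1), S.τ m ≫ v = u m ≫ δ m := by
      match m with
      | 0 => exact S.exists_desc_zero hS hadd (hK.effInjective 0 (Nat.zero_le n)) _
      | m + 1 =>
        refine S.exists_desc_succ hS hadd (hK.effInjective _ (by omega)) (by omega) _ ?_
        rw [← Category.assoc, hu m (by omega), Category.assoc, hK.isComplex m (by omega),
          comp_zero]
    refine ⟨Function.update u (m + 1) v, fun i hi => ?_, ?_⟩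
    · by_cases him : i = m
      · subst him
        simpa using hv
      · rw [Function.update_of_ne (by omega), Function.update_of_ne (by omega)]
        exact hu i (by omega)
    · rwa [Function.update_of_ne (by omega)]

lemma RepSeq.IsClass.exists_sub_eq {S : RepSeq M n A B} (hS : S.HomologyWeaklyEffaceable 𝒳)
    (hadd : S.IsAdditive) (hK : IsCoresolution n 𝒳 n K δ)
    {hK0 : K 0 = preadditiveYoneda.obj A} {β β' : preadditiveYoneda.obj B ⟶ K (n + 1)}
    (hβ : S.IsClass δ hK0 β) (hβ' : S.IsClass δ hK0 β') :
    ∃ h : preadditiveYoneda.obj B ⟶ K n, β - β' = h ≫ δ n := by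
  obtain ⟨u, hu, hu0, hun⟩ := hβ
  obtain ⟨u', hu', hu0', hun'⟩ := hβ'
  have hw : ∀ i ≤ n, S.τ i ≫ (u (i + 1) - u' (i + 1)) = (u i - u' i) ≫ δ i := fun i hi => by
    rw [Preadditive.comp_sub, Preadditive.sub_comp, hu i hi, hu' i hi]
  have step : ∀ m ≤ n, ∃ s : S.F (m + 1) ⟶ K m,
      S.τ m ≫ (u (m + 1) - u' (m + 1) - s ≫ δ m) = 0 := by
    intro m
    induction m with
    | zero => exact fun _ => ⟨0, by rw [zero_comp, sub_zero, hw 0 (by omega), hu0, hu0',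
        sub_self, zero_comp]⟩
    | succ m ih =>
      intro hm
      obtain ⟨s, hs⟩ := ih (by omega)
      obtain ⟨t, ht⟩ := S.exists_desc_succ hS hadd (hK.effInjective m (by omega)) hm _ hs
      refine ⟨t, ?_⟩
      rw [Preadditive.comp_sub, hw (m + 1) hm, ← Category.assoc, ht, ← Preadditive.sub_comp,
        sub_sub_cancel, Category.assoc, hK.isComplex m (by omega), comp_zero]
  obtain ⟨s, hs⟩ := step n le_rfl
  have h0 := (hK.effInjective n le_rfl).separated.hom_eq_zero hs hS.2.2
  rw [hun, hun', ← Preadditive.comp_sub] at h0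
  refine ⟨eqToHom S.hFtop.symm ≫ s, ?_⟩
  rw [Category.assoc, ← sub_eq_zero.1 h0]
  simp

lemma RepSeq.IsClass.add_comp {S : RepSeq M n A B} (hn : 1 ≤ n)
    {hK0 : K 0 = preadditiveYoneda.obj A} {β : preadditiveYoneda.obj B ⟶ K (n + 1)}
    (hβ : S.IsClass δ hK0 β) (h : preadditiveYoneda.obj B ⟶ K n) :
    S.IsClass δ hK0 (β + h ≫ δ n) := by
  obtain ⟨u, hu, hu0, hun⟩ := hβ
  refine ⟨Function.update (Function.update u n (u n + S.τ n ≫ eqToHom S.hFtop ≫ h)) (n + 1)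
    (u (n + 1) + eqToHom S.hFtop ≫ h ≫ δ n), fun i hi => ?_, ?_, ?_⟩
  · rw [Function.update_of_ne (a := i) (by omega)]
    by_cases hin : i = n
    · subst hin
      simp [hu i le_rfl]
    · rw [Function.update_of_ne (by omega), Function.update_of_ne hin]
      by_cases hin' : i + 1 = n
      · subst hin'
        rw [Function.update_self, Preadditive.comp_add, ← Category.assoc (S.τ i),
          S.isComplex i le_rfl, zero_comp, add_zero, hu i hi]
      · rw [Function.update_of_ne hin', hu i hi]
  · rw [Function.update_of_ne (by omega), Function.update_of_ne (by omega), hu0]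
  · rw [Function.update_self, Preadditive.comp_add, hun]

lemma RepSeq.IsClass.of_connects {S T : RepSeq M n A B} (hST : RepSeqConnects S T)
    {hK0 : K 0 = preadditiveYoneda.obj A} {β : preadditiveYoneda.obj B ⟶ K (n + 1)}
    (hβ : T.IsClass δ hK0 β) : S.IsClass δ hK0 β := by
  obtain ⟨φ, hφ, hφ0, hφn⟩ := hST
  obtain ⟨u, hu, hu0, hun⟩ := hβ
  refine ⟨fun i => φ i ≫ u i, fun i hi => ?_, ?_, ?_⟩
  · rw [← Category.assoc, hφ i hi, Category.assoc, hu i hi, Category.assoc]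
  · simp only [hφ0, hu0, eqToHom_trans]
  · simp only [hφn, hun, eqToHom_trans_assoc]

/-- The extension class is invariant under Yoneda equivalence. -/
lemma RepSeqStep.isClass {S T : RepSeq M n A B} (hST : RepSeqStep 𝒳 S T) (hn : 1 ≤ n)
    (hK : IsCoresolution n 𝒳 n K δ) {hK0 : K 0 = preadditiveYoneda.obj A}
    {β : preadditiveYoneda.obj B ⟶ K (n + 1)} (hβ : S.IsClass δ hK0 β) :
    T.IsClass δ hK0 β := by
  obtain ⟨hS, hT, h | h⟩ := hST
  · have hSa := S.isAdditive fun i h1 h2 => (hS.1 i h1 h2).1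
    have hTa := T.isAdditive fun i h1 h2 => (hT.1 i h1 h2).1
    obtain ⟨β', hβ'⟩ := T.exists_isClass hT.2 hTa hK hK0
    obtain ⟨h, hh⟩ := hβ.exists_sub_eq hS.2 hSa hK (hβ'.of_connects h)
    rw [sub_eq_iff_eq_add'.1 hh]
    exact hβ'.add_comp hn h
  · exact hβ.of_connects h

lemma RepSeq.IsClass.of_reflTransGen {S T : RepSeq M n A B}
    {hK0 : K 0 = preadditiveYoneda.obj A} {β : preadditiveYoneda.obj B ⟶ K (n + 1)}
    (hβ : S.IsClass δ hK0 β) (hST : Relation.ReflTransGen (RepSeqStep 𝒳) S T) (hn : 1 ≤ n)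
    (hK : IsCoresolution n 𝒳 n K δ) : T.IsClass δ hK0 β := by
  induction hST with
  | refl => exact hβ
  | tail _ h ih => exact h.isClass hn hK ih

lemma RepSeq.IsClass.exists_hom_of_repSeqOf {Z : NSeq M} {h0 : Z.X 0 = A}
    {htop : Z.X (n + 1) = B} {hcx : Z.IsComplex n} {hK0 : K 0 = preadditiveYoneda.obj A}
    {β : preadditiveYoneda.obj B ⟶ K (n + 1)} (hβ : (repSeqOf n Z h0 htop hcx).IsClass δ hK0 β) :
    ∃ v : ∀ i, preadditiveYoneda.obj (Z.X i) ⟶ K i,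
      (∀ i ≤ n, preadditiveYoneda.map (Z.d i) ≫ v (i + 1) = v i ≫ δ i) ∧
      v 0 = eqToHom ((congrArg preadditiveYoneda.obj h0).trans hK0.symm) ∧
      v (n + 1) = eqToHom (congrArg preadditiveYoneda.obj htop) ≫ β :=
  hβ

end ExtensionClass

end NExactCat

namespace NExactCat

section Comparison

variable {M : Type u} [SmallCategory M] [Preadditive M] {n : ℕ} {𝒳 : Set (NSeq M)}
  {K : ℕ → (Mᵒᵖ ⥤ AddCommGrpCat.{u})} {δ : ∀ i, K i ⟶ K (i + 1)}

lemma IsCoresolution.additive (hK : IsCoresolution n 𝒳 n K δ) [(K 0).Additive] {i : ℕ}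
    (hi : i ≤ n + 1) : (K i).Additive := by
  match i with
  | 0 => assumption
  | i + 1 => exact (hK.effInjective i (by omega)).additive

lemma IsCoresolution.exists_lift (hK : IsCoresolution n 𝒳 n K δ) [(K 0).Additive] {i : ℕ}
    (hi : i < n) {V : M} (c : preadditiveYoneda.obj V ⟶ K (i + 1)) (hc : c ≫ δ (i + 1) = 0) :
    ∃ h, h ≫ δ i = c := by
  have := hK.additive (i := i) (by omega)
  obtain ⟨y, hy⟩ := hK.exact i hi V (c.app _ (𝟙 V))
    (congrArg (fun w : preadditiveYoneda.obj V ⟶ K (i + 2) => w.app _ (𝟙 V)) hc)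
  refine ⟨yonedaHom (K i) y, yonedaObj_hom_ext ?_⟩
  rw [← hy]
  exact congrArg ((δ i).app (op V)) (yonedaHom_app_id (K i) y)

/-- A morphism of complexes from representable functors to a coresolution whose last component
factors through the last differential has a first component factoring through the first
differential. -/
lemma IsCoresolution.exists_factor_zero (hK : IsCoresolution n 𝒳 n K δ) [(K 0).Additive]
    {P : NSeq M} (hP : P.IsComplex n) {c : ∀ i, preadditiveYoneda.obj (P.X i) ⟶ K i}
    (hc : ∀ i ≤ n, preadditiveYoneda.map (P.d i) ≫ c (i + 1) = c i ≫ δ i)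
    (h : preadditiveYoneda.obj (P.X (n + 1)) ⟶ K n) (hh : c (n + 1) = h ≫ δ n) :
    ∃ t, c 0 = preadditiveYoneda.map (P.d 0) ≫ t := by
  have step : ∀ m j, j + m = n → ∃ t : preadditiveYoneda.obj (P.X (j + 1)) ⟶ K j,
      (c j - preadditiveYoneda.map (P.d j) ≫ t) ≫ δ j = 0 := by
    intro m
    induction m with
    | zero =>
      intro j hj
      obtain rfl : j = n := hj
      refine ⟨h, ?_⟩
      rw [Preadditive.sub_comp, ← hc j le_rfl, Category.assoc, ← hh, sub_self]
    | succ m ih =>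
      intro j hj
      obtain ⟨t, ht⟩ := ih (j + 1) (by omega)
      obtain ⟨s, hs⟩ := hK.exists_lift (by omega) _ ht
      refine ⟨s, ?_⟩
      rw [Preadditive.sub_comp, Category.assoc, hs, Preadditive.comp_sub, hc j (by omega),
        ← Category.assoc, ← Functor.map_comp, hP j (by omega), preadditiveYoneda_map_zero,
        zero_comp, sub_zero, sub_self]
  obtain ⟨t, ht⟩ := step n 0 (by omega)
  refine ⟨t, sub_eq_zero.1 ?_⟩
  ext V x
  exact hK.injective V.unop _ (congrArg
    (fun w : preadditiveYoneda.obj (P.X 0) ⟶ K 1 => w.app V x) ht)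

lemma IsNSeqHom.yoneda_comp {P W : NSeq M} {a : ∀ i, P.X i ⟶ W.X i} (ha : IsNSeqHom n P W a)
    {v : ∀ i, preadditiveYoneda.obj (W.X i) ⟶ K i}
    (hv : ∀ i ≤ n, preadditiveYoneda.map (W.d i) ≫ v (i + 1) = v i ≫ δ i) (i : ℕ) (hi : i ≤ n) :
    preadditiveYoneda.map (P.d i) ≫ preadditiveYoneda.map (a (i + 1)) ≫ v (i + 1) =
      (preadditiveYoneda.map (a i) ≫ v i) ≫ δ i := by
  rw [← Category.assoc, ← Functor.map_comp, ha i hi, Functor.map_comp, Category.assoc, hv i hi,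
    Category.assoc]

lemma exists_eq_comp_of_yoneda {V X Y : M} {F : Mᵒᵖ ⥤ AddCommGrpCat.{u}}
    {v : preadditiveYoneda.obj Y ⟶ F} [IsIso v] {p : V ⟶ X} {a : V ⟶ Y}
    {t : preadditiveYoneda.obj X ⟶ F}
    (h : preadditiveYoneda.map a ≫ v = preadditiveYoneda.map p ≫ t) : ∃ s, a = p ≫ s := by
  refine ⟨preadditiveYoneda.preimage (t ≫ inv v), preadditiveYoneda.map_injective ?_⟩
  rw [Functor.map_comp, Functor.map_preimage, ← Category.assoc, ← h, Category.assoc,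
    IsIso.hom_inv_id, Category.comp_id]

lemma IsNSeqHom.exists_homotopy_id {Z W : NSeq M} (hZ : IsNExactSeq n Z)
    {f : ∀ i, Z.X i ⟶ W.X i} (hf : IsNSeqHom n Z W f) {g : ∀ i, W.X i ⟶ Z.X i}
    (hg : IsNSeqHom n W Z g) (h0 : f 0 ≫ g 0 = 𝟙 _) :
    ∃ s : ∀ i, Z.X (i + 1) ⟶ Z.X i, f 0 ≫ g 0 - 𝟙 (Z.X 0) = Z.d 0 ≫ s 0 ∧
      (∀ i < n, f (i + 1) ≫ g (i + 1) - 𝟙 (Z.X (i + 1)) =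
        Z.d (i + 1) ≫ s (i + 1) + s i ≫ Z.d i) ∧
      f (n + 1) ≫ g (n + 1) - 𝟙 (Z.X (n + 1)) = s n ≫ Z.d n := by
  refine hZ.2.2.exists_homotopy hZ.1 (a := fun i => f i ≫ g i - 𝟙 (Z.X i)) (fun i hi => ?_) 0 ?_
  · simp only [Preadditive.comp_sub, Preadditive.sub_comp, Category.comp_id, Category.id_comp,
      Category.assoc, ← hg i hi]
    rw [← Category.assoc, hf i hi, Category.assoc]
  · simp only [h0, sub_self, comp_zero]

variable [HasFiniteBiproducts M]

/-- The extension class of `W` detects whether a morphism to the last term of `W` lifts along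
the last differential. -/
lemma IsCoresolution.exists_lift_last (hK : IsCoresolution n 𝒳 n K δ) [(K 0).Additive]
    (h𝒳 : IsNExactStructure n 𝒳) (hn : 1 ≤ n) {W : NSeq M} (hW : W ∈ 𝒳)
    {v : ∀ i, preadditiveYoneda.obj (W.X i) ⟶ K i} [IsIso (v 0)]
    (hv : ∀ i ≤ n, preadditiveYoneda.map (W.d i) ≫ v (i + 1) = v i ≫ δ i)
    {V : M} (z : V ⟶ W.X (n + 1)) (h : preadditiveYoneda.obj V ⟶ K n)
    (hh : preadditiveYoneda.map z ≫ v (n + 1) = h ≫ δ n) : ∃ w, w ≫ W.d n = z := by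
  obtain ⟨Y, p, q, ⟨P, hP, rfl, rfl, hd⟩, hq⟩ :=
    h𝒳.exists_lift hn (g := W.d n) ⟨W, hW, rfl, rfl, by simp⟩ z
  obtain rfl : P.d n = p := by simpa using hd
  obtain ⟨hPc, -, hPr⟩ := h𝒳.nExact P hP
  obtain ⟨hWc, hWl, -⟩ := h𝒳.nExact W hW
  obtain ⟨a, ha, -, rfl⟩ := hWl.exists_hom hPc q z hq.symm
  obtain ⟨t, ht⟩ := hK.exists_factor_zero hPc
    (c := fun i => preadditiveYoneda.map (a i) ≫ v i) (ha.yoneda_comp hv) h hh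
  obtain ⟨s, hs⟩ := exists_eq_comp_of_yoneda ht
  obtain ⟨r, -, -, hr⟩ := hPr.exists_homotopy hWc ha s hs
  exact ⟨r n, hr.symm⟩

/-- Admissible `n`-exact sequences with compatible extension classes are related by a morphism
of complexes with prescribed end components. -/
lemma IsCoresolution.exists_hom (hK : IsCoresolution n 𝒳 n K δ) [(K 0).Additive]
    (h𝒳 : IsNExactStructure n 𝒳) (hn : 1 ≤ n) {Z W : NSeq M} (hZ : Z ∈ 𝒳) (hW : W ∈ 𝒳)
    {u : ∀ i, preadditiveYoneda.obj (Z.X i) ⟶ K i}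
    (hu : ∀ i ≤ n, preadditiveYoneda.map (Z.d i) ≫ u (i + 1) = u i ≫ δ i)
    {v : ∀ i, preadditiveYoneda.obj (W.X i) ⟶ K i} [IsIso (v 0)]
    (hv : ∀ i ≤ n, preadditiveYoneda.map (W.d i) ≫ v (i + 1) = v i ≫ δ i)
    (a : Z.X 0 ⟶ W.X 0) (ha : u 0 = preadditiveYoneda.map a ≫ v 0)
    (b : Z.X (n + 1) ⟶ W.X (n + 1))
    (hb : u (n + 1) = preadditiveYoneda.map b ≫ v (n + 1)) :
    ∃ f : ∀ i, Z.X i ⟶ W.X i, IsNSeqHom n Z W f ∧ f 0 = a ∧ f (n + 1) = b := by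
  obtain ⟨hZc, -, -⟩ := h𝒳.nExact Z hZ
  obtain ⟨hWc, hWl, -⟩ := h𝒳.nExact W hW
  obtain ⟨w, hw⟩ := hK.exists_lift_last h𝒳 hn hW hv (Z.d n ≫ b) (u n) (by
    rw [Functor.map_comp, Category.assoc, ← hb, hu n le_rfl])
  obtain ⟨f, hf, -, rfl⟩ := hWl.exists_hom hZc w b hw.symm
  obtain ⟨t, ht⟩ := hK.exists_factor_zero hZc
    (c := fun i => preadditiveYoneda.map (f i) ≫ v i - u i) (fun i hi => by
      rw [Preadditive.comp_sub, Preadditive.sub_comp, hf.yoneda_comp hv i hi, hu i hi]) 0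
    (by rw [hb, sub_self, zero_comp])
  obtain ⟨s, hs⟩ := exists_eq_comp_of_yoneda (v := v 0) (p := Z.d 0) (a := f 0 - a) (t := t) (by
    rw [← ht, ha, ← Preadditive.sub_comp]
    congr 1
    rw [eq_sub_iff_add_eq, ← preadditiveYoneda_map_add, sub_add_cancel])
  refine ⟨Function.update (Function.update f 1 (f 1 - s ≫ W.d 0)) 0 a, fun i hi => ?_, by simp,
    ?_⟩
  · rw [Function.update_of_ne (a := i + 1) (by omega)]
    match i with
    | 0 =>
      rw [Function.update_self, Function.update_self, Preadditive.comp_sub, hf 0 hi,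
        ← Category.assoc, ← hs, Preadditive.sub_comp, sub_sub_cancel]
    | 1 =>
      rw [Function.update_of_ne (by omega), Function.update_of_ne (by omega),
        Function.update_self, Preadditive.sub_comp, Category.assoc, hWc 0 hi, comp_zero, sub_zero]
      exact hf 1 hi
    | i + 2 =>
      rw [Function.update_of_ne (by omega), Function.update_of_ne (by omega),
        Function.update_of_ne (by omega)]
      exact hf (i + 2) hi
  · rw [Function.update_of_ne (by omega), Function.update_of_ne (by omega)]

lemma homologyWeaklyEffaceable_repSeqOf (h𝒳 : IsNExactStructure n 𝒳) (hn : 1 ≤ n) {Z : NSeq M}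
    (hZ : Z ∈ 𝒳) {A B : M} (h0 : Z.X 0 = A) (htop : Z.X (n + 1) = B) :
    (repSeqOf n Z h0 htop (h𝒳.nExact Z hZ).1).HomologyWeaklyEffaceable 𝒳 := by
  obtain ⟨-, hl, -⟩ := h𝒳.nExact Z hZ
  refine ⟨fun X (x : X ⟶ Z.X 0) hx => ?_, fun i hi X (x : X ⟶ Z.X (i + 1)) hx => ?_,
    fun X (x : X ⟶ Z.X (n + 1)) => ?_⟩
  · obtain ⟨V, g, hg⟩ := h𝒳.exists_admEpi hn X
    refine ⟨V, g, hg, ?_⟩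
    obtain rfl : x = 0 := hl.1 X (Eq.trans hx zero_comp.symm)
    exact comp_zero
  · obtain ⟨V, g, hg⟩ := h𝒳.exists_admEpi hn X
    obtain ⟨y, rfl⟩ := (hl.2 X i hi x).1 hx
    exact ⟨V, g, hg, g ≫ y, Category.assoc _ _ _⟩
  · obtain ⟨V, g, q, hg, hq⟩ := h𝒳.exists_lift hn (g := Z.d n) ⟨Z, hZ, rfl, rfl, by simp⟩ x
    exact ⟨V, g, hg, q, hq⟩

end Comparison

end NExactCat

namespace NExactCat

/-- Let `(M,𝒳)` be a small `n`-exact category and `Z`, `W` two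
`𝒳`-admissible `n`-exact sequences with the same end terms.  If their complexes of
representable functors `0 → H_{X⁰} → ⋯ → H_{X^{n+1}} → 0` are Yoneda equivalent in the
localization of `Mod(M)` at the weakly effaceable functors — i.e. connected by a finite zigzag
of complexes with `Eff`-closed middle terms and weakly effaceable homology, via morphisms of
complexes restricting to the identity on the end terms — then `Z` and `W` are homotopy
equivalent `n`-exact sequences: there is a morphism of complexes `Z ⟶ W` which is the
identity on both end terms and is a homotopy equivalence. -/
theorem homotopy_equivalent_of_yoneda_equivalent
    {M : Type u} [SmallCategory M] [Preadditive M] [HasFiniteBiproducts M]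
    (n : ℕ) (hn : 1 ≤ n) (𝒳 : Set (NSeq M)) (h𝒳 : IsNExactStructure n 𝒳)
    (Z W : NSeq M) (hZ : Z ∈ 𝒳) (hW : W ∈ 𝒳)
    (e0 : W.X 0 = Z.X 0) (etop : W.X (n + 1) = Z.X (n + 1))
    (hzig : Relation.ReflTransGen (RepSeqStep 𝒳)
      (repSeqOf n Z rfl rfl (h𝒳.nExact Z hZ).1)
      (repSeqOf n W e0 etop (h𝒳.nExact W hW).1)) :
    ∃ f : ∀ i, Z.X i ⟶ W.X i,
      (∀ i ≤ n, Z.d i ≫ f (i + 1) = f i ≫ W.d i) ∧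
      f 0 = eqToHom e0.symm ∧ f (n + 1) = eqToHom etop.symm ∧
      ∃ g : ∀ i, W.X i ⟶ Z.X i,
        (∀ i ≤ n, W.d i ≫ g (i + 1) = g i ≫ Z.d i) ∧
        (∃ s : ∀ i, Z.X (i + 1) ⟶ Z.X i,
          f 0 ≫ g 0 - 𝟙 (Z.X 0) = Z.d 0 ≫ s 0 ∧
          (∀ i < n, f (i + 1) ≫ g (i + 1) - 𝟙 (Z.X (i + 1)) =
            Z.d (i + 1) ≫ s (i + 1) + s i ≫ Z.d i) ∧
          f (n + 1) ≫ g (n + 1) - 𝟙 (Z.X (n + 1)) = s n ≫ Z.d n) ∧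
        (∃ t : ∀ i, W.X (i + 1) ⟶ W.X i,
          g 0 ≫ f 0 - 𝟙 (W.X 0) = W.d 0 ≫ t 0 ∧
          (∀ i < n, g (i + 1) ≫ f (i + 1) - 𝟙 (W.X (i + 1)) =
            W.d (i + 1) ≫ t (i + 1) + t i ≫ W.d i) ∧
          g (n + 1) ≫ f (n + 1) - 𝟙 (W.X (n + 1)) = t n ≫ W.d n) := by
  obtain ⟨I, ε, d, hK⟩ :=
    (acyclicUpTo_preadditiveYoneda h𝒳 (Z.X 0)).exists_coresolution h𝒳 hn le_rfl
  generalize hδ : consMap ε d = δ at hK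
  have hK0 : consObj (preadditiveYoneda.obj (Z.X 0)) I 0 = preadditiveYoneda.obj (Z.X 0) := rfl
  clear hδ
  generalize consObj (preadditiveYoneda.obj (Z.X 0)) I = K at δ hK hK0
  have : (K 0).Additive := by
    rw [hK0]
    infer_instance
  obtain ⟨β, hβ⟩ := RepSeq.exists_isClass
    (homologyWeaklyEffaceable_repSeqOf h𝒳 hn hZ rfl rfl)
    (RepSeq.isAdditive _ fun i _ _ => inferInstanceAs (preadditiveYoneda.obj (Z.X i)).Additive)
    hK hK0
  obtain ⟨u, hu, hu0, hun⟩ := hβ.exists_hom_of_repSeqOf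
  obtain ⟨v, hv, hv0, hvn⟩ := (hβ.of_reflTransGen hzig hn hK).exists_hom_of_repSeqOf
  have hv0' : IsIso (v 0) := by
    rw [hv0]
    infer_instance
  have hu0' : IsIso (u 0) := by
    rw [hu0]
    infer_instance
  obtain ⟨f, hf, hf0, hfn⟩ := hK.exists_hom h𝒳 hn hZ hW hu hv (eqToHom e0.symm)
    (by rw [hu0, hv0, eqToHom_map, eqToHom_trans]) (eqToHom etop.symm)
    (by rw [hun, hvn, eqToHom_map, eqToHom_trans_assoc])
  obtain ⟨g, hg, hg0, -⟩ := hK.exists_hom h𝒳 hn hW hZ hv hu (eqToHom e0)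
    (by rw [hu0, hv0, eqToHom_map, eqToHom_trans]) (eqToHom etop)
    (by rw [hun, hvn, eqToHom_map, eqToHom_trans_assoc])
  exact ⟨f, hf, hf0, hfn, g, hg,
    hf.exists_homotopy_id (h𝒳.nExact Z hZ) hg (by rw [hf0, hg0, eqToHom_trans, eqToHom_refl]),
    hg.exists_homotopy_id (h𝒳.nExact W hW) hf (by rw [hf0, hg0, eqToHom_trans, eqToHom_refl])⟩

end NExactCat
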